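/- The generalized hypergeometric series ₄F₃(3/4, 3/4, 3/4, 5/4; 3/2, 7/4, 7/4; 1/16) equals 36·[(1/(2√3))·ψ′(1/3) − π²·(1/10 + 1/(3√3))], where ψ′(1/3) = 9·∑_{k≥0} 1/(3k+1)². Concretely, the sum over n ≥ 0 of ((3/4)ₙ)³·(5/4)ₙ / ((3/2)ₙ·((7/4)ₙ)²·n!) · (1/16)ⁿ equals 36·[(9/(2√3))·∑_{k≥0} 1/(3k+1)² − π²·(1/10 + 1/(3√3))]. -/

import Mathlib

open Real

/-- The Pochhammer symbol (shifted factorial) `(a)ₙ` for a real number `a`. -/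
noncomputable def poch (a : ℝ) (n : ℕ) : ℝ := Polynomial.eval a (ascPochhammer ℝ n)

/-- Power series with coefficients `b`. -/
noncomputable def pser (b : ℕ → ℂ) (u : ℂ) : ℂ := ∑' n, b n * u ^ n

lemma pser_summable {b : ℕ → ℂ} (hb : ∀ n, ‖b n‖ ≤ 1) {u : ℂ} (hu : ‖u‖ < 1) :
    Summable (fun n => b n * u ^ n) := by
  refine Summable.of_norm_bounded (g := fun n => ‖u‖ ^ n)
    (summable_geometric_of_lt_one (norm_nonneg _) hu) (fun n => ?_)
  rw [norm_mul, norm_pow]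
  exact mul_le_of_le_one_left (by positivity) (hb n)

lemma pser_hasSum {b : ℕ → ℂ} (hb : ∀ n, ‖b n‖ ≤ 1) {u : ℂ} (hu : ‖u‖ < 1) :
    HasSum (fun n => b n * u ^ n) (pser b u) := (pser_summable hb hu).hasSum

lemma pser_deriv {b : ℕ → ℂ} (hb : ∀ n, ‖b n‖ ≤ 1) {u : ℂ} (hu : ‖u‖ < 1) :
    ∃ W, HasDerivAt (pser b) W u ∧ HasSum (fun n : ℕ => ((n : ℂ) + 1) * b (n + 1) * u ^ n) W ∧
      HasSum (fun n : ℕ => (n : ℂ) * b n * u ^ n) (u * W) := by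
  obtain ⟨r, hr1, hr2⟩ := exists_between hu
  have hr0 : 0 < r := lt_of_le_of_lt (norm_nonneg _) hr1
  have hsum : Summable (fun n : ℕ => (n : ℝ) * r ^ (n - 1)) := by
    have h := (summable_pow_mul_geometric_of_norm_lt_one (R := ℝ) 1
      (r := r) (by rwa [Real.norm_of_nonneg hr0.le])).mul_left (r⁻¹)
    refine h.congr (fun n => ?_)
    rcases n with _ | n
    · simp
    · simp only [Nat.add_sub_cancel, pow_succ]
      field_simp
  have hbd : ∀ (n : ℕ) (y : ℂ), y ∈ Metric.ball (0 : ℂ) r →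
      ‖b n * ((n : ℂ) * y ^ (n - 1))‖ ≤ (n : ℝ) * r ^ (n - 1) := by
    intro n y hy
    have hy' : ‖y‖ ≤ r := by simpa using (le_of_lt (mem_ball_zero_iff.1 hy))
    rw [norm_mul, norm_mul, norm_pow, Complex.norm_natCast]
    calc _ ≤ 1 * ((n : ℝ) * r ^ (n - 1)) := by
          gcongr
          exact hb n
      _ = _ := one_mul _
  have hu' : u ∈ Metric.ball (0 : ℂ) r := by simpa using hr1
  have hd : HasDerivAt (fun z => ∑' n, b n * z ^ n) (∑' n : ℕ, b n * ((n : ℂ) * u ^ (n - 1))) u := by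
    refine hasDerivAt_tsum_of_isPreconnected (g := fun n z => b n * z ^ n)
      (g' := fun n z => b n * ((n : ℂ) * z ^ (n - 1))) hsum Metric.isOpen_ball
      (convex_ball _ _).isPreconnected (fun n y _ => ?_) hbd hu'
      (pser_summable hb hu) hu'
    exact (hasDerivAt_pow n y).const_mul (b n)
  have hs : HasSum (fun n : ℕ => b n * ((n : ℂ) * u ^ (n - 1)))
      (∑' n : ℕ, b n * ((n : ℂ) * u ^ (n - 1))) :=
    (Summable.of_norm_bounded hsum (fun n => hbd n u hu')).hasSum
  refine ⟨_, hd, ?_, ?_⟩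
  · have := (hasSum_nat_add_iff' 1).2 hs
    simp only [Finset.range_one, Finset.sum_singleton, Nat.cast_zero, zero_mul, mul_zero,
      sub_zero] at this
    refine this.congr_fun ?_ |> id
    intro n
    push_cast
    ring
  · refine (hs.mul_left u).congr_fun ?_ |> id
    intro n
    rcases n with _ | n
    · simp
    · simp only [Nat.add_sub_cancel, pow_succ]
      ring

/-- Normalised central binomial coefficients. -/
noncomputable def cc (n : ℕ) : ℝ := (n.centralBinom : ℝ) / 4 ^ n

lemma cc_zero : cc 0 = 1 := by simp [cc]

lemma cc_succ (n : ℕ) : 2 * ((n : ℝ) + 1) * cc (n + 1) = (2 * n + 1) * cc n := by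
  have h : ((n : ℝ) + 1) * ((n + 1).centralBinom : ℝ) = 2 * (2 * n + 1) * (n.centralBinom : ℝ) := by
    exact_mod_cast Nat.succ_mul_centralBinom_succ n
  unfold cc
  rw [pow_succ]
  field_simp
  linarith

lemma cc_nonneg (n : ℕ) : 0 ≤ cc n := by unfold cc; positivity

lemma cc_le_one (n : ℕ) : cc n ≤ 1 := by
  induction n with
  | zero => simp [cc_zero]
  | succ n ih =>
    have h := cc_succ n
    have h0 := cc_nonneg n
    have hn : (0 : ℝ) ≤ n := Nat.cast_nonneg n
    by_contra hc
    push Not at hc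
    nlinarith

/-- The three coefficient families. -/
noncomputable def b0 (n : ℕ) : ℂ := ((cc n / (2 * n + 1) ^ 2 : ℝ) : ℂ)
noncomputable def b1 (n : ℕ) : ℂ := ((cc n / (2 * n + 1) : ℝ) : ℂ)
noncomputable def b2 (n : ℕ) : ℂ := ((cc n : ℝ) : ℂ)

lemma b2_le (n : ℕ) : ‖b2 n‖ ≤ 1 := by
  rw [b2, Complex.norm_real, Real.norm_of_nonneg (cc_nonneg n)]
  exact cc_le_one n

lemma b1_le (n : ℕ) : ‖b1 n‖ ≤ 1 := by
  have := cc_nonneg n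
  rw [b1, Complex.norm_real, Real.norm_of_nonneg (by positivity)]
  rw [div_le_one (by positivity)]
  have := cc_le_one n
  have hn : (0 : ℝ) ≤ n := Nat.cast_nonneg n
  linarith

lemma b0_le (n : ℕ) : ‖b0 n‖ ≤ 1 := by
  have := cc_nonneg n
  rw [b0, Complex.norm_real, Real.norm_of_nonneg (by positivity)]
  rw [div_le_one (by positivity)]
  have := cc_le_one n
  have hn : (0 : ℝ) ≤ n := Nat.cast_nonneg n
  nlinarith

lemma b0_deriv {u : ℂ} (hu : ‖u‖ < 1) :
    ∃ W, HasDerivAt (pser b0) W u ∧ pser b0 u + 2 * u * W = pser b1 u := by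
  obtain ⟨W, h1, _, h3⟩ := pser_deriv b0_le hu
  refine ⟨W, h1, ?_⟩
  have h := (pser_hasSum b0_le hu).add (h3.mul_left 2)
  rw [← mul_assoc] at h
  refine h.unique ((pser_hasSum b1_le hu).congr_fun (fun n => ?_))
  have hn : (2 * (n : ℂ) + 1) ≠ 0 := by exact_mod_cast (by positivity : (2 * (n : ℝ) + 1) ≠ 0)
  simp only [b0, b1]
  push_cast
  field_simp
  ring

lemma b1_deriv {u : ℂ} (hu : ‖u‖ < 1) :
    ∃ W, HasDerivAt (pser b1) W u ∧ pser b1 u + 2 * u * W = pser b2 u := by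
  obtain ⟨W, h1, _, h3⟩ := pser_deriv b1_le hu
  refine ⟨W, h1, ?_⟩
  have h := (pser_hasSum b1_le hu).add (h3.mul_left 2)
  rw [← mul_assoc] at h
  refine h.unique ((pser_hasSum b2_le hu).congr_fun (fun n => ?_))
  have hn : (2 * (n : ℂ) + 1) ≠ 0 := by exact_mod_cast (by positivity : (2 * (n : ℝ) + 1) ≠ 0)
  simp only [b2, b1]
  push_cast
  field_simp
  ring

lemma b2_deriv {u : ℂ} (hu : ‖u‖ < 1) :
    ∃ W, HasDerivAt (pser b2) W u ∧ 2 * W * (1 - u) = pser b2 u := by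
  obtain ⟨W, h1, h2, h3⟩ := pser_deriv b2_le hu
  refine ⟨W, h1, ?_⟩
  have h := (h2.mul_left 2).sub (h3.mul_left 2)
  have e : 2 * W * (1 - u) = 2 * W - 2 * (u * W) := by ring
  rw [e]
  refine h.unique ((pser_hasSum b2_le hu).congr_fun (fun n => ?_))
  have h := cc_succ n
  have h' : 2 * ((n : ℂ) + 1) * b2 (n + 1) = (2 * n + 1) * b2 n := by
    simp only [b2]; exact_mod_cast h
  linear_combination (u ^ n) * h'

lemma pser_zero (b : ℕ → ℂ) : pser b 0 = b 0 := by
  unfold pser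
  rw [tsum_eq_single 0]
  · simp
  · intro n hn; simp [hn]

/-- Dilogarithm and its derivative. -/
noncomputable def dil (z : ℂ) : ℂ := pser (fun n => 1 / (n : ℂ) ^ 2) z
noncomputable def dilM (z : ℂ) : ℂ := pser (fun n => 1 / ((n : ℂ) + 1)) z

lemma dil_norm (n : ℕ) : ‖(1 / (n : ℂ) ^ 2)‖ = 1 / (n : ℝ) ^ 2 := by
  simp

lemma dil_coeff_le (n : ℕ) : ‖(1 / (n : ℂ) ^ 2)‖ ≤ 1 := by
  rw [dil_norm]
  rcases n with _ | n
  · simp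
  · rw [div_le_one (by positivity)]
    exact one_le_pow₀ (by push_cast; linarith [(Nat.cast_nonneg n : (0 : ℝ) ≤ n)])

lemma dilM_coeff_le (n : ℕ) : ‖(1 / ((n : ℂ) + 1))‖ ≤ 1 := by
  have : ‖(1 / ((n : ℂ) + 1))‖ = 1 / ((n : ℝ) + 1) := by
    rw [show (1 / ((n : ℂ) + 1)) = ((1 / ((n : ℝ) + 1) : ℝ) : ℂ) by push_cast; ring,
      Complex.norm_real, Real.norm_of_nonneg (by positivity)]
  rw [this, div_le_one (by positivity)]
  linarith [(Nat.cast_nonneg n : (0 : ℝ) ≤ n)]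

lemma dil_bound (n : ℕ) {z : ℂ} (hz : ‖z‖ ≤ 1) : ‖1 / (n : ℂ) ^ 2 * z ^ n‖ ≤ 1 / (n : ℝ) ^ 2 := by
  rw [norm_mul, dil_norm, norm_pow]
  exact mul_le_of_le_one_right (by positivity) (pow_le_one₀ (norm_nonneg _) hz)

lemma dil_summable {z : ℂ} (hz : ‖z‖ ≤ 1) : Summable (fun n : ℕ => 1 / (n : ℂ) ^ 2 * z ^ n) :=
  Summable.of_norm_bounded hasSum_zeta_two.summable (fun n => dil_bound n hz)

lemma dil_cont : ContinuousOn dil (Metric.closedBall 0 1) := by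
  unfold dil pser
  refine continuousOn_tsum (u := fun n : ℕ => 1 / (n : ℝ) ^ 2) (fun n => by fun_prop)
    hasSum_zeta_two.summable (fun n z hz => dil_bound n (by simpa using hz))

lemma dil_deriv {z : ℂ} (hz : ‖z‖ < 1) : HasDerivAt dil (dilM z) z := by
  obtain ⟨W, h1, h2, _⟩ := pser_deriv dil_coeff_le hz
  have : W = dilM z := by
    refine h2.unique ((pser_hasSum dilM_coeff_le hz).congr_fun (fun n => ?_))
    have : ((n : ℂ) + 1) ≠ 0 := Nat.cast_add_one_ne_zero n
    push_cast
    field_simp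
  rw [← this]; exact h1

lemma dilM_log {z : ℂ} (hz : ‖z‖ < 1) : z * dilM z = - Complex.log (1 - z) := by
  refine ((pser_hasSum dilM_coeff_le hz).mul_left z).unique
    ((Complex.hasSum_taylorSeries_neg_log' hz).congr_fun (fun n => ?_))
  rw [pow_succ]; ring

lemma dil_zero : dil 0 = 0 := by rw [dil, pser_zero]; simp
lemma dilM_zero : dilM 0 = 1 := by rw [dilM, pser_zero]; simp

lemma dil_dup {z : ℂ} (hz : ‖z‖ ≤ 1) : dil z + dil (-z) = dil (z ^ 2) / 2 := by
  have hz2 : ‖z ^ 2‖ ≤ 1 := by rw [norm_pow]; exact pow_le_one₀ (norm_nonneg _) hz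
  have hs := ((dil_summable hz).hasSum.add (dil_summable (z := -z) (by rwa [norm_neg])).hasSum)
  have he : HasSum (fun n : ℕ => 1 / (n : ℂ) ^ 2 * z ^ n + 1 / (n : ℂ) ^ 2 * (-z) ^ n)
      (dil (z ^ 2) / 2 + 0) := by
    refine HasSum.even_add_odd ?_ ?_
    · refine ((dil_summable hz2).hasSum.div_const 2).congr_fun (fun n => ?_)
      push_cast
      rw [(even_two_mul n).neg_pow, pow_mul]
      ring
    · refine hasSum_zero.congr_fun (fun n => ?_)
      rw [Odd.neg_pow ⟨n, rfl⟩]; ring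
  rw [add_zero] at he
  exact hs.unique he

section main
open Complex Set

lemma key_cos (d : ℂ) (h1 : ∀ t ∈ Icc (0 : ℝ) 1, ‖Complex.sin (t * d)‖ < 1) :
    ∀ t ∈ Icc (0 : ℝ) 1, pser b2 (Complex.sin (t * d) ^ 2) * Complex.cos (t * d) = 1 := by
  have hd : ∀ t ∈ Icc (0 : ℝ) 1,
      HasDerivAt (fun t : ℝ => pser b2 (Complex.sin (t * d) ^ 2) * Complex.cos (t * d)) 0 t := by
    intro t ht
    have hu : ‖Complex.sin (t * d) ^ 2‖ < 1 := by
      rw [norm_pow]; exact pow_lt_one₀ (norm_nonneg _) (h1 t ht) two_ne_zero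
    obtain ⟨W, hW, hW2⟩ := b2_deriv hu
    have hl : HasDerivAt (fun s : ℂ => s * d) d (t : ℂ) := by
      simpa using (hasDerivAt_id (t : ℂ)).mul_const d
    have hs := (hl.csin.pow 2)
    have hc := hl.ccos
    have := ((HasDerivAt.comp (t : ℂ) hW hs).mul hc).comp_ofReal
    refine this.congr_deriv ?_
    simp only [Function.comp, Pi.pow_apply]
    have hsc := Complex.sin_sq_add_cos_sq (t * d)
    push_cast
    simp only [pow_one]
    linear_combination (2 * W * Complex.sin (t * d) * d) * hsc + Complex.sin (t * d) * d * hW2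
  intro t ht
  have := constant_of_has_deriv_right_zero (a := (0 : ℝ)) (b := 1)
    (fun s hs => (hd s hs).continuousAt.continuousWithinAt)
    (fun s hs => (hd s (Ico_subset_Icc_self hs)).hasDerivWithinAt) t ht
  rw [this]
  simp [pser_zero, b2, cc_zero]

lemma key_arcsin (d : ℂ) (h1 : ∀ t ∈ Icc (0 : ℝ) 1, ‖Complex.sin (t * d)‖ < 1) :
    ∀ t ∈ Icc (0 : ℝ) 1, Complex.sin (t * d) * pser b1 (Complex.sin (t * d) ^ 2) = t * d := by
  have hd : ∀ t ∈ Icc (0 : ℝ) 1,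
      HasDerivAt (fun t : ℝ => Complex.sin (t * d) * pser b1 (Complex.sin (t * d) ^ 2) - t * d)
        0 t := by
    intro t ht
    have hu : ‖Complex.sin (t * d) ^ 2‖ < 1 := by
      rw [norm_pow]; exact pow_lt_one₀ (norm_nonneg _) (h1 t ht) two_ne_zero
    obtain ⟨W, hW, hW2⟩ := b1_deriv hu
    have hl : HasDerivAt (fun s : ℂ => s * d) d (t : ℂ) := by
      simpa using (hasDerivAt_id (t : ℂ)).mul_const d
    have hs := (hl.csin.pow 2)
    have := ((hl.csin.mul (HasDerivAt.comp (t : ℂ) hW hs)).sub hl).comp_ofReal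
    refine this.congr_deriv ?_
    simp only [Function.comp, Pi.pow_apply]
    have hk := key_cos d h1 t ht
    push_cast
    simp only [pow_one]
    linear_combination d * hk + Complex.cos (t * d) * d * hW2
  intro t ht
  have := constant_of_has_deriv_right_zero (a := (0 : ℝ)) (b := 1)
    (fun s hs => (hd s hs).continuousAt.continuousWithinAt)
    (fun s hs => (hd s (Ico_subset_Icc_self hs)).hasDerivWithinAt) t ht
  simp only [ofReal_zero, zero_mul, Complex.sin_zero, sub_zero] at this
  exact sub_eq_zero.1 this

lemma key_dil (d : ℂ) (h1 : ∀ t ∈ Icc (0 : ℝ) 1, ‖Complex.sin (t * d)‖ < 1)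
    (h2 : ∀ t ∈ Ico (0 : ℝ) 1, ‖1 - Complex.exp (-2 * I * (t * d))‖ < 1)
    (h3 : ‖1 - Complex.exp (-2 * I * d)‖ ≤ 1)
    (h4 : ∀ t ∈ Ico (0 : ℝ) 1, -π < (-2 * I * (t * d)).im ∧ (-2 * I * (t * d)).im ≤ π) :
    2 * I * Complex.sin d * pser b0 (Complex.sin d ^ 2) + d ^ 2
      = dil (1 - Complex.exp (-2 * I * d)) := by
  have hd0 : ∀ t ∈ Icc (0 : ℝ) 1,
      HasDerivAt (fun t : ℝ => 2 * I * (Complex.sin (t * d) * pser b0 (Complex.sin (t * d) ^ 2))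
        + (t * d) ^ 2)
        (2 * I * (d * Complex.cos (t * d) * pser b1 (Complex.sin (t * d) ^ 2)) + 2 * (t * d) * d) t := by
    intro t ht
    have hu : ‖Complex.sin (t * d) ^ 2‖ < 1 := by
      rw [norm_pow]; exact pow_lt_one₀ (norm_nonneg _) (h1 t ht) two_ne_zero
    obtain ⟨W, hW, hW2⟩ := b0_deriv hu
    have hl : HasDerivAt (fun s : ℂ => s * d) d (t : ℂ) := by
      simpa using (hasDerivAt_id (t : ℂ)).mul_const d
    have hs := (hl.csin.pow 2)
    have := (((hl.csin.mul (HasDerivAt.comp (t : ℂ) hW hs)).const_mul (2 * I)).add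
      (hl.pow 2)).comp_ofReal
    refine this.congr_deriv ?_
    simp only [Function.comp, Pi.pow_apply]
    push_cast
    simp only [pow_one]
    linear_combination 2 * I * Complex.cos (t * d) * d * hW2
  have hdz : ∀ t : ℝ, HasDerivAt (fun s : ℂ => 1 - Complex.exp (-2 * I * (s * d)))
      (2 * I * d * Complex.exp (-2 * I * (t * d))) (t : ℂ) := by
    intro t
    have hl : HasDerivAt (fun s : ℂ => s * d) d (t : ℂ) := by
      simpa using (hasDerivAt_id (t : ℂ)).mul_const d
    refine ((hl.const_mul (-2 * I)).cexp.const_sub 1).congr_deriv ?_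
    ring
  have hc : ContinuousOn (fun t : ℝ => dil (1 - Complex.exp (-2 * I * (t * d)))) (Icc 0 1) := by
    refine dil_cont.comp (by fun_prop) ?_
    intro t ht
    rw [mem_closedBall_zero_iff]
    rcases eq_or_lt_of_le ht.2 with h | h
    · subst h; simpa using h3
    · exact (h2 t ⟨ht.1, h⟩).le
  have := constant_of_has_deriv_right_zero (a := (0 : ℝ)) (b := 1)
    (f := fun t : ℝ => (2 * I * (Complex.sin (t * d) * pser b0 (Complex.sin (t * d) ^ 2))
        + (t * d) ^ 2) - dil (1 - Complex.exp (-2 * I * (t * d))))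
    (ContinuousOn.sub (fun s hs => (hd0 s hs).continuousAt.continuousWithinAt) hc)
    (fun t ht => by
      have hz := h2 t ht
      have hD := (HasDerivAt.comp (t : ℂ) (dil_deriv hz) (hdz t)).comp_ofReal
      have := (hd0 t (Ico_subset_Icc_self ht)).sub hD
      refine (this.congr_deriv ?_).hasDerivWithinAt
      have hlog := dilM_log hz
      rw [sub_sub_cancel, Complex.log_exp (h4 t ht).1 (h4 t ht).2] at hlog
      have has := key_arcsin d h1 t (Ico_subset_Icc_self ht)
      set a : ℂ := t * d with ha
      by_cases hs : Complex.sin a = 0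
      · have ha0 : a = 0 := by rw [← has, hs, zero_mul]
        rw [ha0]
        simp [pser_zero, dilM_zero, b1, cc_zero]
      · apply mul_left_cancel₀ hs
        have e1 : Complex.exp (-2 * I * a) = Complex.exp (-(a * I)) ^ 2 := by
          rw [← Complex.exp_nat_mul]; congr 1; push_cast; ring
        have e2 : Complex.exp (-(a * I)) = Complex.cos a - Complex.sin a * I := by
          rw [← neg_mul, Complex.exp_mul_I, Complex.cos_neg, Complex.sin_neg]; ring
        have e3 := Complex.sin_sq_add_cos_sq a
        have hne : Complex.exp (-(a * I)) ≠ 0 := Complex.exp_ne_zero _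
        rw [e1] at hlog ⊢
        rw [e2] at hlog hne ⊢
        set s := Complex.sin a
        set c := Complex.cos a
        set m := dilM (1 - (c - s * I) ^ 2)
        have hm : (c - s * I) * s * m = a := by
          have hI : (2 * I : ℂ) ≠ 0 := by simp
          apply mul_left_cancel₀ hI
          have : 1 - (c - s * I) ^ 2 = 2 * I * s * (c - s * I) := by
            linear_combination (-1 : ℂ) * e3 + s ^ 2 * Complex.I_sq
          rw [this] at hlog
          linear_combination hlog
        linear_combination (2 * I * d * c) * has - 2 * I * d * (c - s * I) * hm
          + 2 * a * d * s * Complex.I_sq) 1 (by simp)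
  simp only [ofReal_one, one_mul, ofReal_zero, zero_mul, Complex.sin_zero, mul_zero, Complex.exp_zero,
    sub_self, dil_zero] at this
  linear_combination this

end main

/-- Real dilogarithm. -/
noncomputable def rdil (x : ℝ) : ℝ := (dil x).re
noncomputable def rdilM (x : ℝ) : ℝ := (dilM x).re

lemma rdil_deriv {x : ℝ} (hx : |x| < 1) : HasDerivAt rdil (rdilM x) x :=
  (dil_deriv (z := (x : ℂ)) (by simpa using hx)).real_of_complex

lemma rdil_cont : ContinuousOn rdil (Set.Icc (-1) 1) := by
  refine Complex.continuous_re.comp_continuousOn (dil_cont.comp (by fun_prop) ?_)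
  intro x hx
  simpa [abs_le] using hx

lemma rdilM_log {x : ℝ} (hx : |x| < 1) : x * rdilM x = - Real.log (1 - x) := by
  have h := congrArg Complex.re (dilM_log (z := (x : ℂ)) (by simpa using hx))
  rw [Complex.re_ofReal_mul] at h
  rw [rdilM, h, Complex.neg_re, ← Complex.ofReal_one, ← Complex.ofReal_sub, Complex.log_ofReal_re]

lemma rdil_zero : rdil 0 = 0 := by simp [rdil, dil_zero]

lemma rdil_dup {x : ℝ} (hx : |x| ≤ 1) : rdil x + rdil (-x) = rdil (x ^ 2) / 2 := by
  have h := congrArg Complex.re (dil_dup (z := (x : ℂ)) (by simpa using hx))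
  rw [← Complex.ofReal_pow, ← Complex.ofReal_neg] at h
  simpa [rdil] using h

lemma dil_hasSum {z : ℂ} (hz : ‖z‖ ≤ 1) : HasSum (fun n : ℕ => 1 / (n : ℂ) ^ 2 * z ^ n) (dil z) :=
  (dil_summable hz).hasSum

lemma dil_conj (z : ℂ) : dil (starRingEnd ℂ z) = starRingEnd ℂ (dil z) := by
  unfold dil pser
  rw [Complex.conj_tsum]
  simp

lemma dil_ofReal (x : ℝ) : dil (x : ℂ) = ((rdil x : ℝ) : ℂ) := by
  have h := dil_conj (x : ℂ)
  rw [Complex.conj_ofReal] at h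
  exact (Complex.conj_eq_iff_re.1 h.symm).symm

lemma rdil_one : rdil 1 = π ^ 2 / 6 := by
  have h := Complex.hasSum_re (dil_hasSum (z := 1) (by simp))
  have h2 : HasSum (fun n : ℕ => (1 : ℝ) / (n : ℝ) ^ 2) (dil 1).re := by
    refine h.congr_fun (fun n => ?_)
    rw [one_pow, mul_one]
    have : (1 / (n : ℂ) ^ 2) = ((1 / (n : ℝ) ^ 2 : ℝ) : ℂ) := by push_cast; ring
    rw [this, Complex.ofReal_re]
  have := h2.unique hasSum_zeta_two
  simpa [rdil] using this

/-- Reciprocal of the golden ratio. -/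
noncomputable def rho : ℝ := (√5 - 1) / 2

lemma rho_sq : rho ^ 2 = 1 - rho := by
  have h : √5 ^ 2 = 5 := Real.sq_sqrt (by norm_num)
  unfold rho; nlinarith

lemma rho_pos : 0 < rho := by
  have h : (1 : ℝ) < √5 := by rw [Real.lt_sqrt] <;> norm_num
  unfold rho; linarith

lemma rho_lt : rho < 1 := by
  have := rho_sq; have := rho_pos; nlinarith

lemma const_of_deriv {f : ℝ → ℝ} {b : ℝ} (hb : 0 < b) (hf : ContinuousOn f (Set.Icc 0 b))
    (hd : ∀ x ∈ Set.Ioo 0 b, HasDerivAt f 0 x) : f b = f 0 := by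
  obtain ⟨c, _, hc⟩ := exists_hasDerivAt_eq_slope f (fun _ => 0) hb hf hd
  have : b - 0 ≠ 0 := by linarith
  field_simp at hc
  linarith

lemma rdilM_cont : ContinuousOn rdilM (Set.Ioo (-1) 1) := by
  intro x hx
  obtain ⟨W, hW, _⟩ := pser_deriv dilM_coeff_le (u := (x : ℂ)) (by simpa [abs_lt] using hx)
  exact hW.real_of_complex.continuousAt.continuousWithinAt

lemma reflection : rdil rho + rdil (1 - rho) = π ^ 2 / 6 - Real.log rho * Real.log (1 - rho) := by
  have hp := rho_pos
  have hl := rho_lt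
  have h := const_of_deriv (f := fun x => rdil x + rdil (1 - x) - (x * Real.log x) * rdilM x) hp
    (by
      refine ContinuousOn.sub (ContinuousOn.add ?_ ?_) (ContinuousOn.mul ?_ ?_)
      · exact rdil_cont.mono (fun x hx => ⟨by linarith [hx.1], by linarith [hx.2]⟩)
      · refine rdil_cont.comp (by fun_prop) (fun x hx => ⟨by linarith [hx.2], by linarith [hx.1]⟩)
      · exact Real.continuous_mul_log.continuousOn
      · exact rdilM_cont.mono (fun x hx => ⟨by linarith [hx.1], by linarith [hx.2]⟩))
    (by
      intro x hx
      have hx0 : 0 < x := hx.1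
      have hx1 : x < 1 := by linarith [hx.2]
      have ha : |x| < 1 := by rw [abs_lt]; constructor <;> linarith
      have hb : |1 - x| < 1 := by rw [abs_lt]; constructor <;> linarith
      have d1 := rdil_deriv ha
      have d2 : HasDerivAt (fun x => rdil (1 - x)) (rdilM (1 - x) * (-1)) x :=
        HasDerivAt.comp x (rdil_deriv hb) ((hasDerivAt_id x).const_sub 1)
      have d3 : HasDerivAt (fun x => Real.log x * Real.log (1 - x))
          (x⁻¹ * Real.log (1 - x) + Real.log x * (-1 / (1 - x))) x :=
        (Real.hasDerivAt_log hx0.ne').mul (((hasDerivAt_id x).const_sub 1).log (by simp; linarith))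
      have d4 := (d1.add d2).add d3
      have e1 := rdilM_log ha
      have e2 := rdilM_log hb
      rw [sub_sub_cancel] at e2
      have hne : 1 - x ≠ 0 := by linarith
      refine (d4.congr_deriv ?_).congr_of_eventuallyEq ?_
      · have e1' : rdilM x = - Real.log (1 - x) / x := by rw [← e1]; field_simp
        have e2' : rdilM (1 - x) = - Real.log x / (1 - x) := by rw [← e2]; field_simp
        rw [e1', e2']; field_simp; ring
      · filter_upwards [isOpen_Ioo.mem_nhds (⟨hx0, hx1⟩ : x ∈ Set.Ioo (0 : ℝ) 1)] with y hy
        have := rdilM_log (x := y) (by rw [abs_lt]; constructor <;> linarith [hy.1, hy.2])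
        simp only [Pi.add_apply]
        linear_combination (-Real.log y) * this)
  have hl2 := rdilM_log (x := rho) (by rw [abs_lt]; constructor <;> linarith)
  simp only [rdil_zero, sub_zero, rdil_one, zero_mul] at h
  linear_combination h + Real.log rho * hl2

lemma landen : rdil (-rho) + rdil (rho / (1 + rho)) = - Real.log (1 + rho) ^ 2 / 2 := by
  have hp := rho_pos
  have hl := rho_lt
  have h := const_of_deriv
    (f := fun x => rdil (-x) + rdil (x / (1 + x)) + Real.log (1 + x) ^ 2 / 2) hp
    (by
      refine ContinuousOn.add (ContinuousOn.add ?_ ?_) ?_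
      · exact rdil_cont.comp (by fun_prop) (fun x hx => ⟨by linarith [hx.2], by linarith [hx.1]⟩)
      · refine rdil_cont.comp (ContinuousOn.div (by fun_prop) (by fun_prop)
          (fun x hx => by linarith [hx.1])) (fun x hx => ⟨?_, ?_⟩)
        · have := hx.1
          have : 0 ≤ x / (1 + x) := by positivity
          linarith
        · have := hx.1
          rw [div_le_one (by linarith)]; linarith
      · refine ContinuousOn.div_const (ContinuousOn.pow (ContinuousOn.log (by fun_prop)
          (fun x hx => by linarith [hx.1])) 2) 2)
    (by
      intro x hx
      have hx0 : 0 < x := hx.1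
      have hx1 : x < 1 := by linarith [hx.2]
      have hq0 : 0 < x / (1 + x) := by positivity
      have hq1 : x / (1 + x) < 1 := by rw [div_lt_one (by linarith)]; linarith
      have ha : |-x| < 1 := by rw [abs_lt]; constructor <;> linarith
      have hb : |x / (1 + x)| < 1 := by rw [abs_lt]; constructor <;> linarith
      have hne : 1 + x ≠ 0 := by linarith
      have d1 : HasDerivAt (fun x => rdil (-x)) (rdilM (-x) * (-1)) x :=
        HasDerivAt.comp x (rdil_deriv ha) ((hasDerivAt_id x).neg)
      have d2 : HasDerivAt (fun x => rdil (x / (1 + x)))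
          (rdilM (x / (1 + x)) * ((1 * (1 + x) - x * 1) / (1 + x) ^ 2)) x :=
        HasDerivAt.comp x (rdil_deriv hb)
          ((hasDerivAt_id x).div ((hasDerivAt_id x).const_add 1) hne)
      have d3 : HasDerivAt (fun x => Real.log (1 + x) ^ 2 / 2)
          (2 * Real.log (1 + x) ^ 1 * (1 / (1 + x)) / 2) x :=
        ((((hasDerivAt_id x).const_add 1).log hne).pow 2).div_const 2
      have e1 := rdilM_log ha
      have e2 := rdilM_log hb
      rw [sub_neg_eq_add] at e1
      rw [show 1 - x / (1 + x) = (1 + x)⁻¹ by field_simp; ring, Real.log_inv, neg_neg] at e2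
      refine ((d1.add d2).add d3).congr_deriv ?_
      have e1' : rdilM (-x) = Real.log (1 + x) / x := by
        rw [eq_div_iff hx0.ne']; linarith
      have e2' : rdilM (x / (1 + x)) = Real.log (1 + x) * (1 + x) / x := by
        rw [← e2]; field_simp
      rw [e1', e2']; field_simp; ring)
  simp only [neg_zero, rdil_zero, zero_div, add_zero, Real.log_one] at h
  linarith

lemma rdil_rho : rdil rho = π ^ 2 / 10 - Real.log rho ^ 2 := by
  have hp := rho_pos
  have hl := rho_lt
  have hs := rho_sq
  have h1 := reflection
  have h2 := landen
  have h3 := rdil_dup (x := rho) (by rw [abs_le]; constructor <;> linarith)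
  have hne : 1 + rho ≠ 0 := by linarith
  have e1 : 1 + rho = rho⁻¹ := by field_simp; linarith
  have e2 : rho / (1 + rho) = rho ^ 2 := by rw [e1]; field_simp
  rw [e2, e1, Real.log_inv] at h2
  rw [← hs, Real.log_pow] at h1
  push_cast at h1
  linarith

section evals
open Complex Set

lemma eval_neg : pser b0 (-1 / 4) = ((π ^ 2 / 10 : ℝ) : ℂ) := by
  have hp := rho_pos
  have hl := rho_lt
  have hs := rho_sq
  set L : ℝ := - Real.log rho with hL
  have hLpos : 0 < L := by rw [hL]; linarith [Real.log_neg hp hl]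
  have hexp : Real.exp (-L) = rho := by rw [hL, neg_neg, Real.exp_log hp]
  have hexp' : Real.exp L = 1 + rho := by
    have : Real.exp L = (Real.exp (-L))⁻¹ := by rw [Real.exp_neg L, inv_inv]
    rw [this, hexp]; field_simp; linarith
  have hsinh : Real.sinh L = 1 / 2 := by rw [Real.sinh_eq, hexp, hexp']; ring
  set d : ℂ := ((-L : ℝ) : ℂ) * I with hd
  have hsin : ∀ t : ℝ, Complex.sin (t * d) = ((Real.sinh (-(t * L)) : ℝ) : ℂ) * I := by
    intro t
    rw [show (t : ℂ) * d = ((-(t * L) : ℝ) : ℂ) * I by rw [hd]; push_cast; ring,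
      Complex.sin_mul_I, Complex.ofReal_sinh]
  have hex : ∀ t : ℝ, -2 * I * (t * d) = ((-(2 * t * L) : ℝ) : ℂ) := by
    intro t
    rw [hd]; push_cast
    linear_combination (2 * (t : ℂ) * L) * Complex.I_sq
  have hex1 : ∀ t : ℝ, 0 ≤ t → ‖1 - Complex.exp (-2 * I * (t * d))‖ < 1 := by
    intro t ht
    rw [hex, ← Complex.ofReal_exp, ← Complex.ofReal_one, ← Complex.ofReal_sub, Complex.norm_real,
      Real.norm_eq_abs, abs_lt]
    have h1 := Real.exp_pos (-(2 * t * L))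
    have h2 : Real.exp (-(2 * t * L)) ≤ 1 := Real.exp_le_one_iff.2 (by
      have : 0 ≤ 2 * t * L := by positivity
      linarith)
    constructor <;> linarith
  have key := key_dil d
    (by
      intro t ht
      rw [hsin, norm_mul, Complex.norm_I, mul_one, Complex.norm_real, Real.sinh_neg, norm_neg,
        Real.norm_eq_abs]
      have h0 : 0 ≤ t * L := mul_nonneg ht.1 hLpos.le
      rw [abs_of_nonneg (Real.sinh_nonneg_iff.2 h0)]
      have : Real.sinh (t * L) ≤ Real.sinh L := Real.sinh_le_sinh.2 (by nlinarith [ht.2])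
      linarith)
    (fun t ht => hex1 t ht.1)
    (by simpa using (hex1 1 zero_le_one).le)
    (by
      intro t ht
      rw [hex, Complex.ofReal_im]
      constructor <;> linarith [Real.pi_pos])
  have s1 : Complex.sin d = -(1 / 2) * I := by
    have := hsin 1
    rw [one_mul, Real.sinh_neg, hsinh, Complex.ofReal_one, one_mul] at this
    rw [this]; push_cast; ring
  have s2 : 1 - Complex.exp (-2 * I * d) = ((rho : ℝ) : ℂ) := by
    have := hex 1
    rw [Complex.ofReal_one, one_mul] at this
    rw [this, ← Complex.ofReal_exp]
    have : Real.exp (-(2 * 1 * L)) = 1 - rho := by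
      rw [← hs, ← hexp, ← Real.exp_nat_mul]; congr 1; push_cast; ring
    rw [this]; push_cast; ring
  rw [s1, s2, dil_ofReal, rdil_rho] at key
  have e : (-(1 / 2) * I) ^ 2 = (-1 / 4 : ℂ) := by
    linear_combination (1 / 4 : ℂ) * Complex.I_sq
  rw [e] at key
  have hd2 : d ^ 2 = -((Real.log rho ^ 2 : ℝ) : ℂ) := by
    rw [hd, hL]; push_cast
    linear_combination (Complex.ofReal (Real.log rho)) ^ 2 * Complex.I_sq
  rw [hd2] at key
  push_cast at key ⊢
  linear_combination key + pser b0 (-1 / 4) * Complex.I_sq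

/-- The point `exp(iπ/3)`. -/
noncomputable def w6 : ℂ := 1 / 2 + (√3 / 2 : ℝ) * I
noncomputable def w3 : ℂ := -1 / 2 + (√3 / 2 : ℝ) * I

lemma sqrt3_sq : ((√3 : ℝ) : ℂ) ^ 2 = 3 := by
  rw [← Complex.ofReal_pow, Real.sq_sqrt (by norm_num)]; norm_num

lemma w6_sq : w6 ^ 2 = w3 := by
  unfold w6 w3; push_cast
  linear_combination (1 / 4 : ℂ) * ((√3 : ℝ) : ℂ) ^ 2 * Complex.I_sq - (1 / 4 : ℂ) * sqrt3_sq

lemma w3_cube : w3 ^ 3 = 1 := by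
  have h := sqrt3_sq
  have h3 : ((√3 : ℝ) : ℂ) ^ 3 = 3 * ((√3 : ℝ) : ℂ) := by rw [pow_succ, h]
  have hI := Complex.I_sq
  have hI3 : I ^ 3 = -I := by rw [pow_succ, hI]; ring
  unfold w3; push_cast
  ring_nf
  rw [h, h3, hI, hI3]
  ring

lemma w6_norm : ‖w6‖ = 1 := by
  have : ‖w6‖ ^ 6 = 1 := by
    rw [← norm_pow, show w6 ^ 6 = (w6 ^ 2) ^ 3 by ring, w6_sq, w3_cube, norm_one]
  exact (pow_eq_one_iff_of_nonneg (norm_nonneg _) (by norm_num)).1 this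

lemma w3_norm : ‖w3‖ = 1 := by rw [← w6_sq, norm_pow, w6_norm, one_pow]

lemma eval_pos_aux : (pser b0 (1 / 4)).re = (dil w6).im := by
  have hpi := Real.pi_pos
  set d : ℂ := ((π / 6 : ℝ) : ℂ) with hd
  have htd : ∀ t : ℝ, (t : ℂ) * d = ((t * (π / 6) : ℝ) : ℂ) := by
    intro t; rw [hd]; push_cast; ring
  have hn : ∀ a : ℝ, ‖1 - Complex.exp (-2 * I * (a : ℂ))‖ = 2 * |Real.sin a| := by
    intro a
    have e : 1 - Complex.exp (-2 * I * (a : ℂ))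
        = 2 * I * ((Real.sin a : ℝ) : ℂ) * Complex.exp (((-a : ℝ) : ℂ) * I) := by
      have e1 : Complex.exp (-2 * I * a) = Complex.exp (-(a * I)) ^ 2 := by
        rw [← Complex.exp_nat_mul]; congr 1; push_cast; ring
      have e2 : Complex.exp (-(a * I)) = Complex.cos a - Complex.sin a * I := by
        rw [← neg_mul, Complex.exp_mul_I, Complex.cos_neg, Complex.sin_neg]; ring
      have e3 := Complex.sin_sq_add_cos_sq (a : ℂ)
      rw [e1, Complex.ofReal_neg, neg_mul, e2, Complex.ofReal_sin]
      linear_combination (-1 : ℂ) * e3 + Complex.sin a ^ 2 * Complex.I_sq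
    rw [e, norm_mul, norm_mul, norm_mul, Complex.norm_exp_ofReal_mul_I, Complex.norm_I,
      Complex.norm_real, Real.norm_eq_abs]
    simp
  have hsl : ∀ t ∈ Ico (0 : ℝ) 1, |Real.sin (t * (π / 6))| < 1 / 2 := by
    intro t ht
    have h0 : 0 ≤ t * (π / 6) := mul_nonneg ht.1 (by positivity)
    have h1 : t * (π / 6) < π / 6 := by nlinarith [ht.2]
    rw [abs_of_nonneg (Real.sin_nonneg_of_nonneg_of_le_pi h0 (by linarith)), ← Real.sin_pi_div_six]
    exact Real.sin_lt_sin_of_lt_of_le_pi_div_two (by linarith) (by linarith) h1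
  have key := key_dil d
    (by
      intro t ht
      rw [htd, ← Complex.ofReal_sin, Complex.norm_real, Real.norm_eq_abs]
      rcases eq_or_lt_of_le ht.2 with h | h
      · rw [h, one_mul, Real.sin_pi_div_six]; norm_num [abs_lt]
      · linarith [hsl t ⟨ht.1, h⟩])
    (by
      intro t ht
      rw [htd, hn]
      linarith [hsl t ht])
    (by
      rw [hd, hn, Real.sin_pi_div_six]; norm_num [abs_le])
    (by
      intro t ht
      have : (-2 * I * (t * d)) = ((-2 * (t * (π / 6)) : ℝ) : ℂ) * I := by
        rw [htd]; push_cast; ring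
      rw [this, Complex.im_ofReal_mul, Complex.I_im]
      have h0 : 0 ≤ t * (π / 6) := mul_nonneg ht.1 (by positivity)
      have h1 : t * (π / 6) < π / 6 := by nlinarith [ht.2]
      constructor <;> linarith)
  have s1 : Complex.sin d = 1 / 2 := by
    rw [hd, ← Complex.ofReal_sin, Real.sin_pi_div_six]; push_cast; ring
  have s2 : 1 - Complex.exp (-2 * I * d) = w6 := by
    have : -2 * I * d = ((-(π / 3) : ℝ) : ℂ) * I := by rw [hd]; push_cast; ring
    rw [this, Complex.exp_mul_I, ← Complex.ofReal_cos, ← Complex.ofReal_sin, Real.cos_neg,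
      Real.sin_neg, Real.cos_pi_div_three, Real.sin_pi_div_three, w6]
    push_cast; ring
  rw [s1, s2] at key
  rw [show ((1 : ℂ) / 2) ^ 2 = 1 / 4 by norm_num] at key
  rw [← key, hd, ← Complex.ofReal_pow, Complex.add_im, Complex.ofReal_im]
  rw [show 2 * I * (1 / 2) * pser b0 (1 / 4) = I * pser b0 (1 / 4) by ring, Complex.I_mul_im]
  ring

lemma dil_w6 : (dil w6).im = 3 / 2 * (dil w3).im := by
  have h := dil_dup w6_norm.le
  have e : -w6 = starRingEnd ℂ w3 := by
    unfold w6 w3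
    rw [map_add, map_mul, Complex.conj_I, Complex.conj_ofReal,
      show (-1 / 2 : ℂ) = ((-1 / 2 : ℝ) : ℂ) by push_cast; ring, Complex.conj_ofReal]
    push_cast; ring
  rw [w6_sq, e, dil_conj] at h
  have := congrArg Complex.im h
  rw [Complex.add_im, Complex.conj_im, show dil w3 / 2 = ((1 / 2 : ℝ) : ℂ) * dil w3 by
    push_cast; ring, Complex.im_ofReal_mul] at this
  linarith

lemma dil_w3 : (dil w3).im = √3 / 2 * (2 * (∑' k : ℕ, 1 / (3 * (k : ℝ) + 1) ^ 2) - 4 * π ^ 2 / 27) := by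
  have h0 : ∀ m : ℕ, w3 ^ (3 * m) = 1 := by
    intro m; rw [pow_mul, w3_cube, one_pow]
  have h1 : ∀ m : ℕ, w3 ^ (1 + 3 * m) = w3 := by
    intro m; rw [pow_add, pow_mul, w3_cube, one_pow]; ring
  have h2 : ∀ m : ℕ, w3 ^ (2 + 3 * m) = w3 ^ 2 := by
    intro m; rw [pow_add, pow_mul, w3_cube, one_pow]; ring
  have hw3 : w3.im = √3 / 2 := by simp [w3]
  have hw32 : (w3 ^ 2).im = - (√3 / 2) := by
    rw [pow_two, Complex.mul_im]; simp [w3]; ring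
  have hs := Complex.hasSum_im (dil_hasSum w3_norm.le)
  have hs2 : HasSum (fun n : ℕ => 1 / (n : ℝ) ^ 2 * (w3 ^ n).im) (dil w3).im := by
    refine hs.congr_fun (fun n => ?_)
    rw [← Complex.im_ofReal_mul]; push_cast; rfl
  have r1 := Nat.sumByResidueClasses hs2.summable 3
  have r2 := Nat.sumByResidueClasses hasSum_zeta_two.summable 3
  rw [hs2.tsum_eq] at r1
  rw [hasSum_zeta_two.tsum_eq] at r2
  have f3 : ∀ g : ZMod 3 → ℝ, ∑ j, g j = g 0 + g 1 + g 2 := fun g => Fin.sum_univ_three g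
  rw [f3] at r1 r2
  have v0 : (0 : ZMod 3).val = 0 := rfl
  have v1 : (1 : ZMod 3).val = 1 := rfl
  have v2 : (2 : ZMod 3).val = 2 := rfl
  simp only [v0, v1, v2] at r1 r2
  simp only [zero_add] at r1
  simp only [h0, h1, h2, hw3, hw32, Complex.one_im, mul_zero, tsum_zero, zero_add, tsum_mul_right]
    at r1
  have t0 : ∑' m : ℕ, 1 / (((0 + 3 * m : ℕ)) : ℝ) ^ 2 = π ^ 2 / 6 / 9 := by
    rw [← hasSum_zeta_two.tsum_eq, ← tsum_div_const]
    refine tsum_congr (fun m => ?_)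
    push_cast
    rw [zero_add, mul_pow, div_div]; ring_nf
  have t1 : ∑' m : ℕ, 1 / (((1 + 3 * m : ℕ)) : ℝ) ^ 2 = ∑' k : ℕ, 1 / (3 * (k : ℝ) + 1) ^ 2 := by
    refine tsum_congr (fun m => ?_)
    push_cast; ring_nf
  rw [t0] at r2
  rw [t1] at r1 r2
  rw [r1]
  linear_combination (√3 / 2) * r2

lemma eval_pos : (pser b0 (1 / 4)).re =
    (9 / (2 * Real.sqrt 3)) * (∑' k : ℕ, 1 / (3 * (k : ℝ) + 1)^2) - π ^ 2 * (1 / (3 * √3)) := by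
  rw [eval_pos_aux, dil_w6, dil_w3]
  have h : √3 ^ 2 = 3 := Real.sq_sqrt (by norm_num)
  have hp : √3 ≠ 0 := by positivity
  field_simp
  rw [h]
  ring

end evals

lemma poch_zero (a : ℝ) : poch a 0 = 1 := by simp [poch]

lemma poch_succ (a : ℝ) (n : ℕ) : poch a (n + 1) = poch a n * (a + n) := by
  simp [poch, ascPochhammer_succ_eval]

lemma poch_pos {a : ℝ} (ha : 0 < a) (n : ℕ) : 0 < poch a n := ascPochhammer_pos n a ha

lemma poch_shift (n : ℕ) : poch (3 / 4) n * (4 * n + 3) = 3 * poch (7 / 4) n := by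
  induction n with
  | zero => simp [poch_zero]
  | succ n ih =>
    rw [poch_succ, poch_succ]
    push_cast
    linear_combination (7 / 4 + (n : ℝ)) * ih

lemma poch_cc (n : ℕ) : poch (3 / 4) n * poch (5 / 4) n
    = 2 * cc (2 * n + 1) * poch (3 / 2) n * (n.factorial : ℝ) := by
  induction n with
  | zero =>
    have := cc_succ 0
    simp only [poch_zero, cc_zero] at *
    norm_num at *
    linarith
  | succ n ih =>
    have c1 := cc_succ (2 * n + 1)
    have c2 := cc_succ (2 * n + 2)
    simp only [poch_succ, Nat.factorial_succ]
    push_cast at c1 c2 ⊢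
    rw [show 2 * n + 1 + 1 = 2 * n + 2 by ring] at c1
    rw [show 2 * n + 2 + 1 = 2 * (n + 1) + 1 by ring] at c2
    have e : cc (2 * (n + 1) + 1) * (3 / 2 + n) * (n + 1)
        = cc (2 * n + 1) * (3 / 4 + n) * (5 / 4 + n) := by
      linear_combination (1 / 4 * ((n : ℝ) + 1)) * c2 + (1 / 16 : ℝ) * (4 * n + 5) * c1
    linear_combination (3 / 4 + (n : ℝ)) * (5 / 4 + n) * ih
      - 2 * poch (3 / 2) n * (n.factorial : ℝ) * e

lemma term_eq (n : ℕ) : (poch (3/4) n)^3 * poch (5/4) n /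
        (poch (3/2) n * (poch (7/4) n)^2 * (n.factorial : ℝ)) * (1/16 : ℝ)^n
    = 72 * (cc (2 * n + 1) / (2 * ((2 * n + 1 : ℕ) : ℝ) + 1) ^ 2 * (1 / 4) ^ (2 * n + 1)) := by
  have h1 := poch_shift n
  have h2 := poch_cc n
  have p1 := poch_pos (a := 3 / 2) (by norm_num) n
  have p2 := poch_pos (a := 3 / 4) (by norm_num) n
  have hf : (0 : ℝ) < n.factorial := by exact_mod_cast n.factorial_pos
  have e7 : poch (7 / 4) n = poch (3 / 4) n * (4 * n + 3) / 3 := by linarith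
  have hpow : (1 / 4 : ℝ) ^ (2 * n + 1) = (1 / 16) ^ n / 4 := by
    rw [pow_succ, pow_mul]; norm_num; ring
  have hn : (0 : ℝ) < 4 * n + 3 := by positivity
  have e : (poch (3/4) n)^3 * poch (5/4) n
      = poch (3 / 4) n ^ 2 * (2 * cc (2 * n + 1) * poch (3 / 2) n * (n.factorial : ℝ)) := by
    rw [← h2]; ring
  rw [e, e7, hpow]
  push_cast
  rw [show (2 * (2 * (n : ℝ) + 1) + 1) = 4 * n + 3 by ring]
  field_simp
  ring

lemma rser_hasSum {x : ℝ} (hx : |x| < 1) :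
    HasSum (fun n : ℕ => cc n / (2 * (n : ℝ) + 1) ^ 2 * x ^ n) (pser b0 x).re := by
  refine (Complex.hasSum_re (pser_hasSum b0_le (u := (x : ℂ)) (by simpa using hx))).congr_fun
    (fun n => ?_)
  rw [b0, ← Complex.ofReal_pow, ← Complex.ofReal_mul, Complex.ofReal_re]

/-- `₄F₃(3/4, 3/4, 3/4, 5/4; 3/2, 7/4, 7/4; 1/16)
    = 36·[(1/(2√3))·ψ′(1/3) − π²·(1/10 + 1/(3√3))]`,
where `ψ′(1/3) = 9·∑_{k≥0} 1/(3k+1)²`. -/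
theorem fourF_three_second :
    ∑' n : ℕ, (poch (3/4) n)^3 * poch (5/4) n /
        (poch (3/2) n * (poch (7/4) n)^2 * (n.factorial : ℝ)) * (1/16 : ℝ)^n
      = 36 * ((9 / (2 * Real.sqrt 3)) * (∑' k : ℕ, 1 / (3 * (k : ℝ) + 1)^2)
          - π^2 * (1/10 + 1/(3 * Real.sqrt 3))) := by
  have hp := rser_hasSum (x := 1 / 4) (by norm_num [abs_lt])
  have hm := rser_hasSum (x := -1 / 4) (by norm_num [abs_lt])
  have hsub := hp.sub hm
  have hodd : Summable (fun n : ℕ => 72 * (cc (2 * n + 1) / (2 * ((2 * n + 1 : ℕ) : ℝ) + 1) ^ 2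
      * (1 / 4 : ℝ) ^ (2 * n + 1))) :=
    (hp.summable.comp_injective (i := fun n : ℕ => 2 * n + 1)
      (fun a b h => by simpa using h)).mul_left 72
  rw [tsum_congr term_eq]
  have hs := hodd.hasSum.div_const 36
  have he := HasSum.even_add_odd (f := fun n : ℕ => cc n / (2 * (n : ℝ) + 1) ^ 2 * (1 / 4) ^ n
      - cc n / (2 * (n : ℝ) + 1) ^ 2 * (-1 / 4) ^ n)
    (m := 0) (hasSum_zero.congr_fun (fun n => by
      rw [neg_div, (even_two_mul n).neg_pow]; ring))
    (hs.congr_fun (fun n => by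
      rw [neg_div, Odd.neg_pow ⟨n, rfl⟩]; ring))
  have hfin := he.unique hsub
  have e1 : (pser b0 ((1 / 4 : ℝ) : ℂ)).re = (pser b0 (1 / 4)).re := by push_cast; rfl
  have e2 : (pser b0 ((-1 / 4 : ℝ) : ℂ)).re = π ^ 2 / 10 := by
    have : ((-1 / 4 : ℝ) : ℂ) = -1 / 4 := by push_cast; rfl
    rw [this, eval_neg, Complex.ofReal_re]
  rw [e1, e2, eval_pos] at hfin
  linear_combination 36 * hfin
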